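/- Let d be a positive integer and J ⊊ I square-free monomial ideals of S with ρ_d(I) > 0 and I generated in degrees ≥ d. If sdepth_S (I/J) = d, then depth_S (I/J) = d; that is, Stanley's conjecture holds in this case. -/

import Mathlib

open MvPolynomial

/-- The square-free monomial `∏ i ∈ T, X i` associated to a set `T` of variables. -/
noncomputable def sqMon (K : Type) [Field K] {n : ℕ} (T : Finset (Fin n)) :
    MvPolynomial (Fin n) K :=
  ∏ i ∈ T, X i

/-- `GenBySqMonOfDeg K P I` means: `I` is generated by square-free monomials whose
degrees satisfy the predicate `P`. -/
def GenBySqMonOfDeg (K : Type) [Field K] {n : ℕ} (P : ℕ → Prop)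
    (I : Ideal (MvPolynomial (Fin n) K)) : Prop :=
  ∃ G : Set (Finset (Fin n)), (∀ T ∈ G, P T.card) ∧ I = Ideal.span (sqMon K '' G)

/-- `rho K d I` : the number of square-free monomials of degree `d` belonging to `I`. -/
noncomputable def rho (K : Type) [Field K] {n : ℕ} (d : ℕ)
    (I : Ideal (MvPolynomial (Fin n) K)) : ℕ :=
  Set.ncard {T : Finset (Fin n) | T.card = d ∧ sqMon K T ∈ I}

/-- The maximal graded ideal `(x_1, …, x_n)` of `K[x_1, …, x_n]`. -/
noncomputable def maxGraded (K : Type) [Field K] (n : ℕ) :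
    Ideal (MvPolynomial (Fin n) K) :=
  Ideal.span (Set.range (X : Fin n → MvPolynomial (Fin n) K))

/-- The depth of the module `M` with respect to the ideal `I` : the supremum of the
lengths of `M`-regular sequences consisting of elements of `I`. -/
noncomputable def moduleDepth {R : Type} [CommRing R] (I : Ideal R)
    (M : Type) [AddCommGroup M] [Module R M] : ℕ∞ :=
  sSup {k : ℕ∞ | ∃ rs : List R, k = (rs.length : ℕ∞) ∧ (∀ r ∈ rs, r ∈ I) ∧
    RingTheory.Sequence.IsRegular M rs}

/-- The `R`-module `I/J` (more precisely `I/(I ∩ J)`, which is `I/J` when `J ≤ I`). -/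
noncomputable abbrev idealQuot {R : Type} [CommRing R] (I J : Ideal R) : Type :=
  ↥I ⧸ (Submodule.comap I.subtype (J : Submodule R R))

/-- The poset (here: set, ordered by `⊆`, i.e. divisibility of square-free monomials)
of square-free monomials lying in `I \ J`. -/
def monoPoset (K : Type) [Field K] {n : ℕ} (I J : Ideal (MvPolynomial (Fin n) K)) :
    Set (Finset (Fin n)) :=
  {T | sqMon K T ∈ I ∧ sqMon K T ∉ J}

/-- `C` is a partition of `P` into intervals `[p.1, p.2] = {T | p.1 ⊆ T ⊆ p.2}`:
the intervals have endpoints in `P` and every element of `P` lies in exactly one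
of them. -/
def IntervalPartition {n : ℕ} (P : Set (Finset (Fin n)))
    (C : Finset (Finset (Fin n) × Finset (Fin n))) : Prop :=
  (∀ p ∈ C, p.1 ∈ P ∧ p.2 ∈ P ∧ p.1 ⊆ p.2) ∧
  ∀ T ∈ P, ∃! p, p ∈ C ∧ p.1 ⊆ T ∧ T ⊆ p.2

/-- The Stanley depth of `I/J`: the maximum over interval partitions of the poset of
square-free monomials of `I \ J` of the minimal degree of an upper endpoint. -/
noncomputable def sdepthQuot (K : Type) [Field K] {n : ℕ}
    (I J : Ideal (MvPolynomial (Fin n) K)) : ℕ :=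
  sSup {d : ℕ | ∃ C, IntervalPartition (monoPoset K I J) C ∧ ∀ p ∈ C, d ≤ p.2.card}

/-!
The depth of `I/J` is at least `k` if and only if its Koszul cohomology on the variables vanishes
below degree `k`. Adding to `J` the maximal monomials of `I \ J` one at a time filters `I/J` by
modules `S/(x_j : j ∉ T)` of depth `#T`, so the depth is at least the least degree `d` of a
square-free monomial in `I \ J`.

Suppose that the depth exceeded `d`. The vanishing of the cohomology in degree `d` then makes the
signed incidence matrix between the monomials of degree `d` and those of degree `d + 1` of `I \ J`
injective. By Hall's theorem a matrix with independent columns has an injective choice of nonzero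
entries, which matches every monomial `u` of degree `d` with a multiple `v` of degree `d + 1`. The
intervals `[u, v]`, together with the singletons that remain, show that the Stanley depth exceeds
`d` as well.
-/

section Koszul

open Finset Function

variable {ι R L M N : Type*} [CommRing R] [AddCommGroup L] [Module R L] [AddCommGroup M]
  [Module R M] [AddCommGroup N] [Module R N]

variable (ι R M) in
/-- The Koszul cochains whose components of degree at least `k` vanish. -/
def koszulBelow (k : ℕ) : Submodule R (Finset ι → M) :=
  Submodule.pi {T | k ≤ #T} fun _ => ⊥

lemma mem_koszulBelow {k : ℕ} {f : Finset ι → M} :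
    f ∈ koszulBelow ι R M k ↔ ∀ T, k ≤ #T → f T = 0 := by
  simp [koszulBelow]

lemma koszulBelow_mono {k l : ℕ} (hkl : k ≤ l) : koszulBelow ι R M k ≤ koszulBelow ι R M l :=
  fun _ hf => mem_koszulBelow.2 fun T hT => mem_koszulBelow.1 hf T (hkl.trans hT)

lemma exists_mem_koszulBelow_of_mem_range_compLeft {φ : M →ₗ[R] N} {k : ℕ} {f : Finset ι → N}
    (hf : f ∈ koszulBelow ι R N k) (hφ : f ∈ LinearMap.range (φ.compLeft (Finset ι))) :
    ∃ g ∈ koszulBelow ι R M k, φ.compLeft (Finset ι) g = f := by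
  obtain ⟨g, rfl⟩ := hφ
  refine ⟨fun T => if k ≤ #T then 0 else g T, mem_koszulBelow.2 fun T hT => if_pos hT, ?_⟩
  ext T
  by_cases hT : k ≤ #T
  · simp [hT, mem_koszulBelow.1 hf T hT]
  · simp [hT]

lemma compLeft_mem_koszulBelow (φ : M →ₗ[R] N) {k : ℕ} {f : Finset ι → M}
    (hf : f ∈ koszulBelow ι R M k) : φ.compLeft (Finset ι) f ∈ koszulBelow ι R N k :=
  mem_koszulBelow.2 fun T hT => by
    rw [LinearMap.compLeft_apply, Function.comp_apply, mem_koszulBelow.1 hf T hT, map_zero]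

lemma exact_compLeft {u : L →ₗ[R] M} {v : M →ₗ[R] N} (huv : Exact u v) (α : Type*) :
    Exact (u.compLeft α) (v.compLeft α) := by
  rw [LinearMap.exact_iff, LinearMap.ker_compLeft, LinearMap.range_compLeft,
    LinearMap.exact_iff.1 huv]

variable [LinearOrder ι]

/-- The sign `(-1) ^ #{i ∈ T | i < j}` with which `e_j` enters the wedge product indexed by `T`. -/
def koszulSign (j : ι) (T : Finset ι) : ℤ :=
  (-1) ^ #{i ∈ T | i < j}

lemma koszulSign_mul_self (j : ι) (T : Finset ι) : koszulSign j T * koszulSign j T = 1 := by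
  simp [koszulSign, ← mul_pow]

lemma koszulSign_insert {i j : ι} {T : Finset ι} (hj : j ∉ T) :
    koszulSign i (insert j T) = (if j < i then -1 else 1) * koszulSign i T := by
  unfold koszulSign
  rw [filter_insert]
  split_ifs
  · rw [card_insert_of_notMem (by simp [hj]), pow_succ']
  · rw [one_mul]

lemma koszulSign_insert_self {j : ι} {T : Finset ι} (hj : j ∉ T) :
    koszulSign j (insert j T) = koszulSign j T := by
  simp [koszulSign_insert hj]

lemma koszulSign_erase_mul_swap {i j : ι} {T : Finset ι} (hi : i ∈ T) (hj : j ∈ T) (hij : i ≠ j) :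
    koszulSign j T * koszulSign i (T.erase j) = -(koszulSign i T * koszulSign j (T.erase i)) := by
  have sign_erase {a b : ι} (hb : b ∈ T) :
      koszulSign a T = (if b < a then -1 else 1) * koszulSign a (T.erase b) := by
    rw [← koszulSign_insert (notMem_erase b T), insert_erase hb]
  rw [sign_erase hi, sign_erase (a := i) hj]
  rcases hij.lt_or_gt with h | h <;> simp [h, h.not_gt, mul_comm]

lemma koszulSign_mul_insert_swap {i j : ι} {T : Finset ι} (hi : i ∈ T) (hj : j ∉ T) :
    koszulSign j T * koszulSign i (insert j T) = -(koszulSign i T * koszulSign j (T.erase i)) := by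
  have hij : i ≠ j := ne_of_mem_of_not_mem hi hj
  have hswap := koszulSign_erase_mul_swap (mem_insert_of_mem hi) (mem_insert_self j T) hij
  rw [erase_insert hj, erase_insert_of_ne hij.symm, koszulSign_insert_self hj,
    koszulSign_insert_self (mt mem_of_mem_erase hj)] at hswap
  linear_combination koszulSign j T * koszulSign j (T.erase i) * hswap
    - koszulSign i T * koszulSign j (T.erase i) * koszulSign_mul_self j T
    - koszulSign j T * koszulSign i (insert j T) * koszulSign_mul_self j (T.erase i)

variable (x : ι → R)

/-- The differential of the Koszul cochain complex `K(x; M)`, written on families `f` whose value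
`f T` is the coefficient of the wedge product of the basis vectors indexed by `T`. The degrees are
not separated: a cochain of degree `i` is a family supported on the `T` of cardinality `i`. -/
def koszulD : (Finset ι → M) →ₗ[R] (Finset ι → M) where
  toFun f T := ∑ j ∈ T, koszulSign j T • x j • f (T.erase j)
  map_add' f g := by ext T; simp [sum_add_distrib]
  map_smul' r f := by
    ext T
    simp only [Pi.smul_apply, RingHom.id_apply, smul_sum]
    refine sum_congr rfl fun j _ => ?_
    rw [smul_comm (x j) r, smul_comm _ r]

lemma koszulD_apply (f : Finset ι → M) (T : Finset ι) :
    koszulD x f T = ∑ j ∈ T, koszulSign j T • x j • f (T.erase j) :=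
  rfl

lemma koszulD_koszulD (f : Finset ι → M) : koszulD x (koszulD x f) = 0 := by
  ext T
  simp only [koszulD_apply, smul_sum, Pi.zero_apply, smul_comm (x _) (koszulSign _ _), smul_smul]
  rw [sum_sigma']
  refine sum_involution (fun p _ => ⟨p.2, p.1⟩) ?_ ?_ ?_ fun _ _ => rfl
  · rintro ⟨j, i⟩ h
    obtain ⟨hj, hij, hi⟩ : j ∈ T ∧ i ≠ j ∧ i ∈ T := by simpa using h
    rw [erase_right_comm, mul_comm (x i), koszulSign_erase_mul_swap hi hj hij, neg_smul,
      neg_add_cancel]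
  · rintro ⟨j, i⟩ h - heq
    obtain ⟨-, hij, -⟩ : j ∈ T ∧ i ≠ j ∧ i ∈ T := by simpa using h
    exact hij (congrArg Sigma.fst heq)
  · rintro ⟨j, i⟩ h
    simp only [mem_sigma, mem_erase] at h ⊢
    exact ⟨h.2.2, h.2.1.symm, h.1⟩

/-- Contraction of Koszul cochains against the `j`-th coordinate: a homotopy between `0` and
multiplication by `x j`. -/
def koszulContract (j : ι) (f : Finset ι → M) (T : Finset ι) : M :=
  if j ∈ T then 0 else koszulSign j T • f (insert j T)

lemma koszulD_koszulContract_add (j : ι) (f : Finset ι → M) :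
    koszulD x (koszulContract j f) + koszulContract j (koszulD x f) = x j • f := by
  ext T
  by_cases hj : j ∈ T
  · have hcontract : ∀ i ∈ T, i ≠ j → koszulContract j f (T.erase i) = 0 := fun i _ hij =>
      if_pos (mem_erase.2 ⟨hij.symm, hj⟩)
    rw [Pi.add_apply, koszulD_apply, sum_eq_single_of_mem j hj fun i hi hij => by
      rw [hcontract i hi hij, smul_zero, smul_zero]]
    rw [koszulContract, koszulContract, if_neg (notMem_erase j T), if_pos hj, add_zero,
      insert_erase hj, smul_comm (x j), smul_smul,
      ← koszulSign_insert_self (notMem_erase j T), insert_erase hj, koszulSign_mul_self, one_smul,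
      Pi.smul_apply]
  · have hcancel : ∀ i ∈ T, koszulSign j T • koszulSign i (insert j T) • x i •
        f ((insert j T).erase i) = -(koszulSign i T • x i • koszulContract j f (T.erase i)) := by
      intro i hi
      rw [koszulContract, if_neg (mt mem_of_mem_erase hj),
        erase_insert_of_ne (ne_of_mem_of_not_mem hi hj).symm, smul_comm (x i), smul_smul, smul_smul,
        koszulSign_mul_insert_swap hi hj, neg_smul]
    rw [Pi.add_apply, koszulContract, if_neg hj, koszulD_apply, koszulD_apply, sum_insert hj,
      erase_insert hj, smul_add, smul_sum, sum_congr rfl hcancel, sum_neg_distrib,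
      add_neg_cancel_comm_assoc, koszulSign_insert_self hj, smul_smul, koszulSign_mul_self,
      one_smul, Pi.smul_apply]

lemma smul_mem_range_koszulD {r : R} (hr : r ∈ Ideal.span (Set.range x)) {f : Finset ι → M}
    (hf : koszulD x f = 0) : r • f ∈ LinearMap.range (koszulD (M := M) x) := by
  suffices h : Ideal.span (Set.range x) ≤
      (LinearMap.range (koszulD x)).comap (LinearMap.toSpanSingleton R _ f) from h hr
  refine Ideal.span_le.2 ?_
  rintro _ ⟨j, rfl⟩
  refine ⟨koszulContract j f, ?_⟩
  have hcontract : koszulContract j (0 : Finset ι → M) = 0 := by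
    ext T
    simp [koszulContract]
  rw [LinearMap.toSpanSingleton_apply, ← koszulD_koszulContract_add x j f, hf, hcontract, add_zero]

lemma koszulD_compLeft (φ : M →ₗ[R] N) (f : Finset ι → M) :
    koszulD x (φ.compLeft (Finset ι) f) = φ.compLeft (Finset ι) (koszulD x f) := by
  ext T
  simp [koszulD_apply]

lemma koszulD_apply_mem_smul_top (f : Finset ι → M) (T : Finset ι) :
    koszulD x f T ∈ Ideal.span (Set.range x) • (⊤ : Submodule R M) := by
  refine sum_mem fun j _ => zsmul_mem (Submodule.smul_mem_smul ?_ Submodule.mem_top) _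
  exact Ideal.subset_span (Set.mem_range_self j)

lemma koszulD_mem_koszulBelow {k : ℕ} {f : Finset ι → M} (hf : f ∈ koszulBelow ι R M k) :
    koszulD x f ∈ koszulBelow ι R M (k + 1) := by
  refine mem_koszulBelow.2 fun T hT => sum_eq_zero fun j hj => ?_
  have hcard := card_erase_add_one hj
  rw [mem_koszulBelow.1 hf _ (by omega), smul_zero, smul_zero]

lemma exists_mem_koszulBelow_of_mem_range {k : ℕ} {f : Finset ι → M}
    (hf : f ∈ koszulBelow ι R M (k + 1)) (hrange : f ∈ LinearMap.range (koszulD (M := M) x)) :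
    ∃ g ∈ koszulBelow ι R M k, koszulD x g = f := by
  obtain ⟨g, rfl⟩ := hrange
  refine ⟨fun T => if k ≤ #T then 0 else g T, mem_koszulBelow.2 fun T hT => if_pos hT, ?_⟩
  ext T
  by_cases hT : k + 1 ≤ #T
  · rw [mem_koszulBelow.1 hf T hT, koszulD_apply]
    refine sum_eq_zero fun j hj => ?_
    have hcard := card_erase_add_one hj
    rw [if_pos (by omega), smul_zero, smul_zero]
  · refine sum_congr rfl fun j hj => ?_
    have hcard := card_erase_add_one hj
    simp only [if_neg (show ¬k ≤ #(T.erase j) by omega)]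

/-- The Koszul cohomology `H^i(x; M)` vanishes for all `i < k`. Since the differential raises
degrees by one, there is no need to ask for a primitive of degree below `k - 1`. -/
def KoszulAcyclicBelow (M : Type*) [AddCommGroup M] [Module R M] (k : ℕ) : Prop :=
  ∀ f ∈ koszulBelow ι R M k, koszulD x f = 0 → f ∈ LinearMap.range (koszulD (M := M) x)

namespace KoszulAcyclicBelow

variable {x} {k : ℕ}

lemma zero : KoszulAcyclicBelow x M 0 := fun f hf _ =>
  ⟨0, by ext T; simp [mem_koszulBelow.1 hf T]⟩

lemma of_subsingleton [Subsingleton M] : KoszulAcyclicBelow x M k := fun _ _ _ =>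
  ⟨0, Subsingleton.elim _ _⟩

lemma mono {l : ℕ} (hlk : l ≤ k) (h : KoszulAcyclicBelow x M k) : KoszulAcyclicBelow x M l :=
  fun f hf => h f (koszulBelow_mono hlk hf)

section ShortExact

variable {u : L →ₗ[R] M} {v : M →ₗ[R] N}

lemma mem_range_of_compLeft_mem_range (hu : Injective u) (huv : Exact u v) (hv : Surjective v)
    (hN : KoszulAcyclicBelow x N k) {f : Finset ι → L} (hf : f ∈ koszulBelow ι R L (k + 1))
    (huf : u.compLeft (Finset ι) f ∈ LinearMap.range (koszulD (M := M) x)) :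
    f ∈ LinearMap.range (koszulD (M := L) x) := by
  obtain ⟨b, hb, hbf⟩ :=
    exists_mem_koszulBelow_of_mem_range x (compLeft_mem_koszulBelow u hf) huf
  have hvb : koszulD x (v.compLeft (Finset ι) b) = 0 := by
    rw [koszulD_compLeft, hbf, (exact_compLeft huv _).apply_apply_eq_zero]
  obtain ⟨a', ha'⟩ := hN _ (compLeft_mem_koszulBelow v hb) hvb
  obtain ⟨a, rfl⟩ := hv.comp_left a'
  have hvab : v.compLeft (Finset ι) (b - koszulD x a) = 0 := by
    rw [map_sub, ← koszulD_compLeft, ← ha', sub_eq_zero]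
    rfl
  obtain ⟨c, hc⟩ := (exact_compLeft huv _ _).1 hvab
  refine ⟨c, hu.comp_left ?_⟩
  calc u.compLeft (Finset ι) (koszulD x c) = koszulD x (b - koszulD x a) := by
        rw [← koszulD_compLeft, hc]
    _ = u.compLeft (Finset ι) f := by rw [map_sub, koszulD_koszulD, sub_zero, hbf]

lemma koszulD_eq_zero_of_compLeft (hu : Injective u) {f : Finset ι → L}
    (h : koszulD x (u.compLeft (Finset ι) f) = 0) : koszulD x f = 0 :=
  hu.comp_left <| by rwa [koszulD_compLeft, ← map_zero (u.compLeft (Finset ι))] at h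

lemma of_exact (hu : Injective u) (huv : Exact u v) (hv : Surjective v)
    (hL : KoszulAcyclicBelow x L k) (hN : KoszulAcyclicBelow x N k) :
    KoszulAcyclicBelow x M k := by
  cases k with
  | zero => exact zero
  | succ k =>
    intro f hf hdf
    have hvf := compLeft_mem_koszulBelow v hf
    obtain ⟨a', ha'k, ha'⟩ := exists_mem_koszulBelow_of_mem_range x hvf <| hN _ hvf <| by
      rw [koszulD_compLeft, hdf, map_zero]
    obtain ⟨a, hak, rfl⟩ := exists_mem_koszulBelow_of_mem_range_compLeft ha'k (hv.comp_left a')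
    have hfa : f - koszulD x a ∈ koszulBelow ι R M (k + 1) :=
      sub_mem hf (koszulD_mem_koszulBelow x hak)
    obtain ⟨c, hck, hc⟩ := exists_mem_koszulBelow_of_mem_range_compLeft hfa <|
      (exact_compLeft huv _ _).1 <| by rw [map_sub, ← ha', koszulD_compLeft, sub_self]
    obtain ⟨b, rfl⟩ := hL c hck <| koszulD_eq_zero_of_compLeft hu <| by
      rw [hc, map_sub, hdf, koszulD_koszulD, sub_zero]
    exact ⟨u.compLeft (Finset ι) b + a, by rw [map_add, koszulD_compLeft, hc, sub_add_cancel]⟩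

lemma right_of_exact (hu : Injective u) (huv : Exact u v) (hv : Surjective v)
    (hL : KoszulAcyclicBelow x L (k + 1)) (hM : KoszulAcyclicBelow x M k) :
    KoszulAcyclicBelow x N k := by
  intro f' hf' hdf'
  obtain ⟨f, hf, rfl⟩ := exists_mem_koszulBelow_of_mem_range_compLeft hf' (hv.comp_left f')
  rw [koszulD_compLeft] at hdf'
  obtain ⟨c, hc, hcf⟩ := exists_mem_koszulBelow_of_mem_range_compLeft
    (koszulD_mem_koszulBelow x hf) ((exact_compLeft huv _ _).1 hdf')
  have hdc : koszulD x c = 0 := koszulD_eq_zero_of_compLeft hu <| by rw [hcf, koszulD_koszulD]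
  obtain ⟨a, ha, rfl⟩ := exists_mem_koszulBelow_of_mem_range x hc (hL c hc hdc)
  obtain ⟨b, hb⟩ := hM _ (sub_mem hf (compLeft_mem_koszulBelow u ha)) <| by
    rw [map_sub, koszulD_compLeft, hcf, sub_self]
  refine ⟨v.compLeft (Finset ι) b, ?_⟩
  rw [koszulD_compLeft, hb, map_sub, (exact_compLeft huv _).apply_apply_eq_zero, sub_zero]

lemma of_isSMulRegular {r : R} (hr : r ∈ Ideal.span (Set.range x)) (hreg : IsSMulRegular M r)
    (hrv : Exact (LinearMap.lsmul R M r) v) (hv : Surjective v) (hN : KoszulAcyclicBelow x N k) :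
    KoszulAcyclicBelow x M (k + 1) := fun _ hf hdf =>
  mem_range_of_compLeft_mem_range (u := LinearMap.lsmul R M r) hreg hrv hv hN hf
    (smul_mem_range_koszulD x hr hdf)

end ShortExact

lemma of_isWeaklyRegular {rs : List R} (hrs : ∀ r ∈ rs, r ∈ Ideal.span (Set.range x))
    (hreg : RingTheory.Sequence.IsWeaklyRegular M rs) : KoszulAcyclicBelow x M rs.length := by
  induction rs generalizing M with
  | nil => exact zero
  | cons r rs ih =>
    obtain ⟨hr, hrs⟩ := List.forall_mem_cons.1 hrs
    rw [RingTheory.Sequence.isWeaklyRegular_cons_iff] at hreg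
    exact of_isSMulRegular hr hreg.1 (LinearMap.exact_lsmul_mkQ_smul_top M r)
      (Submodule.mkQ_surjective _) (ih hrs hreg.2)

lemma eq_zero_of_forall_smul_eq_zero (h : KoszulAcyclicBelow x M 1) {m : M}
    (hm : ∀ j, x j • m = 0) : m = 0 := by
  have hbelow : Pi.single ∅ m ∈ koszulBelow ι R M 1 := mem_koszulBelow.2 fun T hT => by
    rw [Pi.single_eq_of_ne (card_pos.1 hT).ne_empty]
  obtain ⟨g, hg⟩ := h _ hbelow <| by
    ext T
    refine sum_eq_zero fun j _ => ?_
    obtain h | h := eq_or_ne (T.erase j) ∅ <;> simp [h, hm]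
  simpa [koszulD_apply] using (congrFun hg ∅).symm

lemma exists_isSMulRegular [IsNoetherianRing R] [Module.Finite R M]
    (h : KoszulAcyclicBelow x M 1) : ∃ r ∈ Ideal.span (Set.range x), IsSMulRegular M r := by
  have hsub : Subsingleton ((R ⧸ Ideal.span (Set.range x)) →ₗ[R] M) := by
    refine subsingleton_of_forall_eq 0 fun φ => Submodule.linearMap_qext _ (LinearMap.ext_ring ?_)
    refine eq_zero_of_forall_smul_eq_zero h fun j => ?_
    calc x j • φ (Submodule.Quotient.mk 1) = φ (Submodule.Quotient.mk (x j)) := by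
          rw [← map_smul, ← Submodule.Quotient.mk_smul, smul_eq_mul, mul_one]
      _ = 0 := by
          rw [(Submodule.Quotient.mk_eq_zero _).2 <| Ideal.subset_span (Set.mem_range_self j),
            map_zero]
  rw [IsSMulRegular.subsingleton_linearMap_iff] at hsub
  rwa [Ideal.annihilator_quotient] at hsub

lemma exists_isWeaklyRegular [IsNoetherianRing R] [Module.Finite R M]
    (h : KoszulAcyclicBelow x M k) : ∃ rs : List R, rs.length = k ∧
      (∀ r ∈ rs, r ∈ Ideal.span (Set.range x)) ∧ RingTheory.Sequence.IsWeaklyRegular M rs := by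
  induction k generalizing M with
  | zero => exact ⟨[], rfl, by simp, .nil R M⟩
  | succ k ih =>
    obtain ⟨r, hr, hreg⟩ := exists_isSMulRegular (h.mono (Nat.le_add_left 1 k))
    obtain ⟨rs, hlen, hrs, hregs⟩ := ih <| right_of_exact (u := LinearMap.lsmul R M r) hreg
      (LinearMap.exact_lsmul_mkQ_smul_top M r) (Submodule.mkQ_surjective _) h (h.mono k.le_succ)
    exact ⟨r :: rs, by rw [List.length_cons, hlen], List.forall_mem_cons.2 ⟨hr, hrs⟩,
      .cons hreg hregs⟩

end KoszulAcyclicBelow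

theorem le_moduleDepth_iff_koszulAcyclicBelow {ι R M : Type} [LinearOrder ι] [CommRing R]
    [IsNoetherianRing R] [AddCommGroup M] [Module R M] [Module.Finite R M] {x : ι → R} {k : ℕ}
    (hx : Ideal.span (Set.range x) • (⊤ : Submodule R M) ≠ ⊤) :
    k ≤ moduleDepth (Ideal.span (Set.range x)) M ↔ KoszulAcyclicBelow x M k := by
  refine ⟨fun h => ?_, fun h => ?_⟩
  · cases k with
    | zero => exact .zero
    | succ k =>
      obtain ⟨_, ⟨rs, rfl, hrs, hreg⟩, hk⟩ :=
        lt_sSup_iff.1 ((Nat.cast_lt.2 k.lt_succ_self).trans_le h)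
      exact .mono (Nat.cast_lt.1 hk) (.of_isWeaklyRegular hrs hreg.toIsWeaklyRegular)
  · obtain ⟨rs, rfl, hrs, hreg⟩ := h.exists_isWeaklyRegular
    refine le_sSup ⟨rs, rfl, hrs, hreg, fun htop => hx (top_le_iff.1 ?_)⟩
    exact htop.le.trans (Submodule.smul_mono_left (Ideal.span_le.2 hrs))

end Koszul

section Colon

variable {R M : Type*} [CommRing R] [AddCommGroup M] [Module R M] (N : Submodule R M) (m : M)

/-- The map `R/(N : m) → M/N` induced by `r ↦ r • m`. -/
def colonSingletonMap : R ⧸ N.colon {m} →ₗ[R] M ⧸ N :=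
  (N.colon {m}).mapQ N (LinearMap.toSpanSingleton R M m) fun _ => Submodule.mem_colon_singleton.1

lemma colonSingletonMap_mk (r : R) :
    colonSingletonMap N m (Submodule.Quotient.mk r) = Submodule.Quotient.mk (r • m) :=
  rfl

lemma colonSingletonMap_injective : Function.Injective (colonSingletonMap N m) := by
  refine (injective_iff_map_eq_zero _).2 fun p hp => ?_
  obtain ⟨r, rfl⟩ := Submodule.Quotient.mk_surjective _ p
  rw [colonSingletonMap_mk, Submodule.Quotient.mk_eq_zero] at hp
  exact (Submodule.Quotient.mk_eq_zero _).2 (Submodule.mem_colon_singleton.2 hp)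

lemma exact_colonSingletonMap_factor : Function.Exact (colonSingletonMap N m)
    (Submodule.factor (le_sup_left : N ≤ N ⊔ Submodule.span R {m})) := by
  intro p
  obtain ⟨y, rfl⟩ := Submodule.Quotient.mk_surjective _ p
  rw [← Submodule.mkQ_apply, Submodule.factor_mk, Submodule.mkQ_apply,
    Submodule.Quotient.mk_eq_zero, sup_comm, Submodule.mem_sup]
  constructor
  · rintro ⟨_, hz, w, hw, rfl⟩
    obtain ⟨r, rfl⟩ := Submodule.mem_span_singleton.1 hz
    refine ⟨Submodule.Quotient.mk r, (Submodule.Quotient.eq N).2 ?_⟩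
    rw [LinearMap.toSpanSingleton_apply, sub_add_cancel_left]
    exact N.neg_mem hw
  · rintro ⟨q, hq⟩
    obtain ⟨r, rfl⟩ := Submodule.Quotient.mk_surjective _ q
    refine ⟨r • m, Submodule.smul_mem _ _ (Submodule.mem_span_singleton_self m), y - r • m, ?_,
      add_sub_cancel _ _⟩
    exact (Submodule.Quotient.eq N).1 hq.symm

lemma KoszulAcyclicBelow.quotient_of_colon {ι : Type*} [LinearOrder ι] {x : ι → R} {k : ℕ}
    {N : Submodule R M} {m : M} (hcolon : KoszulAcyclicBelow x (R ⧸ N.colon {m}) k)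
    (hsup : KoszulAcyclicBelow x (M ⧸ N ⊔ Submodule.span R {m}) k) :
    KoszulAcyclicBelow x (M ⧸ N) k :=
  .of_exact (colonSingletonMap_injective N m) (exact_colonSingletonMap_factor N m)
    (Submodule.factor_surjective le_sup_left) hcolon hsup

lemma comap_subtype_sup_span_singleton {I J : Ideal R} {u : R} (hu : u ∈ I) :
    Submodule.comap I.subtype (J ⊔ Ideal.span {u}) =
      Submodule.comap I.subtype J ⊔ Submodule.span R {⟨u, hu⟩} := by
  refine Submodule.map_injective_of_injective I.injective_subtype ?_
  rw [Submodule.map_sup, Submodule.map_comap_subtype, Submodule.map_comap_subtype,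
    Submodule.map_span, Set.image_singleton, Submodule.subtype_apply]
  exact (inf_sup_assoc_of_le J ((Ideal.span_singleton_le_iff_mem I).2 hu)).symm

lemma KoszulAcyclicBelow.idealQuot_of_colon {ι R : Type} [LinearOrder ι] [CommRing R]
    {x : ι → R} {k : ℕ} {I J : Ideal R} {u : R} (hu : u ∈ I)
    (hcolon : KoszulAcyclicBelow x (R ⧸ (J.colon {u})) k)
    (hsup : KoszulAcyclicBelow x (idealQuot I (J ⊔ Ideal.span {u})) k) :
    KoszulAcyclicBelow x (idealQuot I J) k := by
  have hJu : (Submodule.comap I.subtype J).colon {⟨u, hu⟩} = J.colon {u} := by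
    ext r
    simp only [Submodule.mem_colon_singleton, Submodule.mem_comap, map_smul,
      Submodule.subtype_apply]
  refine quotient_of_colon (m := ⟨u, hu⟩) (hJu ▸ hcolon) ?_
  rwa [← comap_subtype_sup_span_singleton hu]

lemma KoszulAcyclicBelow.quotient_of_isSMulRegular {ι : Type*} [LinearOrder ι] {x : ι → R} {k : ℕ}
    {Q : Ideal R} {r : R} (hr : r ∈ Ideal.span (Set.range x)) (hreg : IsSMulRegular (R ⧸ Q) r)
    (h : KoszulAcyclicBelow x (R ⧸ Q ⊔ Ideal.span {r}) k) :
    KoszulAcyclicBelow x (R ⧸ Q) (k + 1) := by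
  refine .of_isSMulRegular hr hreg (fun p => (exact_colonSingletonMap_factor Q r p).trans ?_)
    (Submodule.factor_surjective le_sup_left) h
  simp only [Set.mem_range, (Submodule.Quotient.mk_surjective _).exists, colonSingletonMap_mk,
    LinearMap.lsmul_apply, ← Submodule.Quotient.mk_smul, smul_eq_mul, mul_comm]

end Colon

section Monomial

open Finset

variable {R : Type*} [CommRing R] {σ : Type*}

lemma isSMulRegular_X_quotient_span_X {j : σ} {s : Set σ} (hj : j ∉ s) :
    IsSMulRegular (MvPolynomial σ R ⧸ Ideal.span (X '' s : Set (MvPolynomial σ R)))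
      (X j : MvPolynomial σ R) := by
  refine (isSMulRegular_quotient_iff_mem_of_smul_mem _ _).2 fun p hp => ?_
  rw [mem_ideal_span_X_image] at hp ⊢
  intro a ha
  obtain ⟨i, hi, hia⟩ := hp (Finsupp.single j 1 + a) <| by
    rwa [mem_support_iff, smul_eq_mul, coeff_X_mul, ← mem_support_iff]
  refine ⟨i, hi, ?_⟩
  rwa [Finsupp.add_apply, Finsupp.single_eq_of_ne (ne_of_mem_of_not_mem hi hj), zero_add] at hia

variable (R) in
lemma koszulAcyclicBelow_quotient_span_X [LinearOrder σ] (T : Finset σ) :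
    KoszulAcyclicBelow (X : σ → MvPolynomial σ R)
      (MvPolynomial σ R ⧸ Ideal.span (X '' (T : Set σ)ᶜ : Set (MvPolynomial σ R))) #T := by
  induction T using Finset.induction_on with
  | empty => exact .zero
  | insert j T hj ih =>
    have hcompl : (T : Set σ)ᶜ = ((insert j T : Finset σ) : Set σ)ᶜ ∪ {j} := by
      ext i
      by_cases hi : i = j <;> simp [hi, hj]
    rw [card_insert_of_notMem hj]
    refine .quotient_of_isSMulRegular (Ideal.subset_span (Set.mem_range_self j))
      (isSMulRegular_X_quotient_span_X (j := j) (by simp)) ?_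
    rwa [← Set.image_singleton (f := X), ← Ideal.span_union, ← Set.image_union, ← hcompl]

variable {K : Type} [Field K] {n : ℕ} {I J : Ideal (MvPolynomial (Fin n) K)} {T U : Finset (Fin n)}

/-- The exponent vector of the square-free monomial `sqMon K T`. -/
noncomputable def sqExp (T : Finset (Fin n)) : Fin n →₀ ℕ :=
  ∑ i ∈ T, Finsupp.single i 1

lemma sqExp_apply (T : Finset (Fin n)) (i : Fin n) : sqExp T i = if i ∈ T then 1 else 0 := by
  simp [sqExp, Finsupp.finsetSum_apply, Finsupp.single_apply]

lemma support_sqExp (T : Finset (Fin n)) : (sqExp T).support = T := by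
  ext i
  simp [sqExp_apply]

lemma sqExp_le_iff {a : Fin n →₀ ℕ} : sqExp T ≤ a ↔ T ⊆ a.support := by
  refine forall_congr' fun i => ?_
  by_cases hi : i ∈ T <;> simp [sqExp_apply, hi, Nat.one_le_iff_ne_zero]

lemma sqMon_eq_monomial (T : Finset (Fin n)) : sqMon K T = monomial (sqExp T) 1 :=
  (monomial_sum_one T fun i => Finsupp.single i 1).symm

lemma mem_span_sqMon_image_iff {G : Set (Finset (Fin n))} {p : MvPolynomial (Fin n) K} :
    p ∈ Ideal.span (sqMon K '' G) ↔ ∀ a ∈ p.support, ∃ T ∈ G, T ⊆ a.support := by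
  have himage : sqMon K '' G = (fun a => monomial a 1) '' (sqExp '' G) := by
    rw [Set.image_image, funext sqMon_eq_monomial]
  simp only [himage, mem_ideal_span_monomial_image, Set.exists_mem_image, sqExp_le_iff]

lemma sqMon_mem_span_sqMon_image_iff {G : Set (Finset (Fin n))} :
    sqMon K U ∈ Ideal.span (sqMon K '' G) ↔ ∃ T ∈ G, T ⊆ U := by
  classical
  rw [mem_span_sqMon_image_iff, sqMon_eq_monomial, support_monomial, if_neg one_ne_zero]
  simp only [Finset.mem_singleton, forall_eq, support_sqExp]

lemma sqMon_mem_of_subset (hT : sqMon K T ∈ I) (hTU : T ⊆ U) : sqMon K U ∈ I :=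
  I.mem_of_dvd (prod_dvd_prod_of_subset _ _ _ hTU) hT

namespace GenBySqMonOfDeg

variable {P : ℕ → Prop}

lemma mono {Q : ℕ → Prop} (hPQ : ∀ k, P k → Q k) (hI : GenBySqMonOfDeg K P I) :
    GenBySqMonOfDeg K Q I :=
  let ⟨G, hG, hIG⟩ := hI
  ⟨G, fun T hT => hPQ _ (hG T hT), hIG⟩

lemma mem_iff (hI : GenBySqMonOfDeg K P I) {p : MvPolynomial (Fin n) K} :
    p ∈ I ↔ ∀ a ∈ p.support, sqMon K a.support ∈ I := by
  obtain ⟨G, -, rfl⟩ := hI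
  simp only [sqMon_mem_span_sqMon_image_iff]
  exact mem_span_sqMon_image_iff

lemma sup_span_singleton (hI : GenBySqMonOfDeg K (fun _ => True) I) (T : Finset (Fin n)) :
    GenBySqMonOfDeg K (fun _ => True) (I ⊔ Ideal.span {sqMon K T}) := by
  obtain ⟨G, -, rfl⟩ := hI
  refine ⟨G ∪ {T}, fun _ _ => trivial, ?_⟩
  rw [Set.image_union, Ideal.span_union, Set.image_singleton]

lemma le_card {d : ℕ} (hI : GenBySqMonOfDeg K (d ≤ ·) I) (hT : sqMon K T ∈ I) : d ≤ #T := by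
  obtain ⟨G, hG, rfl⟩ := hI
  obtain ⟨U, hU, hUT⟩ := sqMon_mem_span_sqMon_image_iff.1 hT
  exact (hG U hU).trans (card_le_card hUT)

lemma monoPoset_nonempty {Q : ℕ → Prop} (hI : GenBySqMonOfDeg K P I) (hJ : GenBySqMonOfDeg K Q J)
    (hIJ : ¬I ≤ J) : (monoPoset K I J).Nonempty := by
  contrapose! hIJ
  refine fun p hp => hJ.mem_iff.2 fun a ha => ?_
  by_contra haJ
  exact Set.eq_empty_iff_forall_notMem.1 hIJ _ ⟨hI.mem_iff.1 hp a ha, haJ⟩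

end GenBySqMonOfDeg

lemma colon_sqMon_eq_span_X (hJ : GenBySqMonOfDeg K (fun _ => True) J)
    (hT : Maximal (· ∈ monoPoset K I J) T) :
    J.colon {sqMon K T} = Ideal.span (X '' (T : Set (Fin n))ᶜ) := by
  refine le_antisymm (fun p hp => mem_ideal_span_X_image.2 fun a ha => ?_) (Ideal.span_le.2 ?_)
  · rw [Submodule.mem_colon_singleton, smul_eq_mul, hJ.mem_iff] at hp
    have haT : a + sqExp T ∈ (p * sqMon K T).support := by
      rwa [mem_support_iff, sqMon_eq_monomial, coeff_mul_monomial, mul_one, ← mem_support_iff]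
    by_contra! haj
    refine hT.prop.2 ?_
    have hsupp : (a + sqExp T).support = T := by
      ext i
      by_cases hi : i ∈ T <;> simp [sqExp_apply, hi, haj i]
    exact hsupp ▸ hp _ haT
  · rintro _ ⟨j, hj, rfl⟩
    have hmul : X j • sqMon K T = sqMon K (insert j T) := (prod_insert hj).symm
    rw [SetLike.mem_coe, Submodule.mem_colon_singleton, hmul]
    by_contra hjT
    refine hj (hT.le_of_ge ⟨sqMon_mem_of_subset hT.prop.1 (subset_insert j T), hjT⟩
      (subset_insert j T) (mem_insert_self j T))

lemma koszulAcyclicBelow_idealQuot {d : ℕ} (hI : GenBySqMonOfDeg K (fun _ => True) I)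
    (hJ : GenBySqMonOfDeg K (fun _ => True) J) (hd : ∀ T ∈ monoPoset K I J, d ≤ #T) :
    KoszulAcyclicBelow (X : Fin n → MvPolynomial (Fin n) K) (idealQuot I J) d := by
  induction J using WellFoundedGT.induction with | _ J ih
  by_cases hIJ : I ≤ J
  · have : Subsingleton (idealQuot I J) :=
      Submodule.Quotient.subsingleton_iff.2 (eq_top_iff.2 fun p _ => hIJ p.2)
    exact .of_subsingleton
  · obtain ⟨T, hT⟩ := (Set.toFinite (monoPoset K I J)).exists_maximal (hI.monoPoset_nonempty hJ hIJ)
    refine .idealQuot_of_colon hT.prop.1 ?_ (ih _ ?_ (hJ.sup_span_singleton T) fun U hU => ?_)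
    · rw [colon_sqMon_eq_span_X hJ hT]
      exact (koszulAcyclicBelow_quotient_span_X K T).mono (hd T hT.prop)
    · exact left_lt_sup.2 fun h => hT.prop.2 (h (Ideal.mem_span_singleton_self _))
    · exact hd U ⟨hU.1, fun hUJ => hU.2 (Ideal.mem_sup_left hUJ)⟩

end Monomial

section Cocycle

open Finset

variable {K : Type} [Field K] {n d : ℕ} {I J : Ideal (MvPolynomial (Fin n) K)}
  {T : Finset (Fin n)}

lemma constantCoeff_eq_zero_of_mem_maxGraded {p : MvPolynomial (Fin n) K}
    (hp : p ∈ maxGraded K n) : constantCoeff p = 0 := by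
  have hle : maxGraded K n ≤ RingHom.ker constantCoeff := by
    refine Ideal.span_le.2 ?_
    rintro _ ⟨j, rfl⟩
    exact constantCoeff_X K j
  exact hle hp

lemma coeff_sqExp_eq_zero_of_mem_maxGraded_mul (hI : GenBySqMonOfDeg K (fun _ => True) I)
    (hT : Minimal (· ∈ monoPoset K I J) T) {p : MvPolynomial (Fin n) K}
    (hp : p ∈ maxGraded K n * I) : coeff (sqExp T) p = 0 := by
  classical
  induction hp using Submodule.mul_induction_on' with
  | add p _ q _ hp hq => rw [coeff_add, hp, hq, add_zero]
  | mem_mul_mem r hr q hq =>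
    rw [coeff_mul]
    refine sum_eq_zero fun ab hab => ?_
    obtain ⟨a, b⟩ := ab
    rw [HasAntidiagonal.mem_antidiagonal] at hab
    by_contra! hne
    have hbI := hI.mem_iff.1 hq b (mem_support_iff.2 (right_ne_zero_of_mul hne))
    have hbT : b.support ⊆ T := by
      rw [← support_sqExp T, ← hab]
      exact Finsupp.support_mono le_add_self
    have hTb : T ⊆ b.support :=
      hT.le_of_le ⟨hbI, fun hbJ => hT.prop.2 (sqMon_mem_of_subset hbJ hbT)⟩ hbT
    have ha : a = 0 := by
      have hb : sqExp T ≤ b := sqExp_le_iff.2 hTb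
      rw [← hab] at hb
      exact (add_le_iff_nonpos_left.1 hb).antisymm zero_le
    refine left_ne_zero_of_mul hne ?_
    rw [ha]
    exact constantCoeff_eq_zero_of_mem_maxGraded hr

variable (K I J) in
open Classical in
/-- The class of the square-free monomial `sqMon K T` in `I/J`, or `0` if it does not lie in `I`. -/
noncomputable def sqMonClass (T : Finset (Fin n)) : idealQuot I J :=
  if hT : sqMon K T ∈ I then Submodule.Quotient.mk ⟨sqMon K T, hT⟩ else 0

lemma sqMonClass_eq_zero (hT : T ∉ monoPoset K I J) : sqMonClass K I J T = 0 := by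
  unfold sqMonClass
  split_ifs with hTI
  · exact (Submodule.Quotient.mk_eq_zero _).2 (not_not.1 fun hTJ => hT ⟨hTI, hTJ⟩)
  · rfl

lemma X_smul_sqMonClass_erase {j : Fin n} (hj : j ∈ T) (hT : sqMon K (T.erase j) ∈ I) :
    (X j : MvPolynomial (Fin n) K) • sqMonClass K I J (T.erase j) = sqMonClass K I J T := by
  rw [sqMonClass, sqMonClass, dif_pos hT, dif_pos (sqMon_mem_of_subset hT (erase_subset j T)),
    ← Submodule.Quotient.mk_smul]
  exact congrArg _ (Subtype.ext (mul_prod_erase T (X : Fin n → MvPolynomial (Fin n) K) hj))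

lemma C_smul_sqMonClass_notMem (hI : GenBySqMonOfDeg K (fun _ => True) I)
    (hJ : GenBySqMonOfDeg K (fun _ => True) J) (hT : Minimal (· ∈ monoPoset K I J) T) {a : K}
    (ha : a ≠ 0) :
    (C a : MvPolynomial (Fin n) K) • sqMonClass K I J T ∉
      maxGraded K n • (⊤ : Submodule (MvPolynomial (Fin n) K) (idealQuot I J)) := by
  intro hmem
  rw [sqMonClass, dif_pos hT.prop.1, ← Submodule.Quotient.mk_smul, ← Submodule.range_mkQ,
    LinearMap.range_eq_map, ← Submodule.map_smul''] at hmem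
  obtain ⟨z, hz, hzT⟩ := hmem
  have hzI : coeff (sqExp T) (z : MvPolynomial (Fin n) K) = 0 := by
    refine coeff_sqExp_eq_zero_of_mem_maxGraded_mul hI hT ?_
    have hzI : I.subtype z ∈ Submodule.map I.subtype (maxGraded K n • ⊤) :=
      Submodule.mem_map_of_mem hz
    rwa [Submodule.map_smul'', Submodule.map_subtype_top, smul_eq_mul] at hzI
  have hsub := (Submodule.Quotient.eq _).1 hzT
  have hcoeff : coeff (sqExp T) ((z : MvPolynomial (Fin n) K) - C a * sqMon K T) ≠ 0 := by
    rwa [coeff_sub, hzI, zero_sub, coeff_C_mul, sqMon_eq_monomial, coeff_monomial, if_pos rfl,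
      mul_one, neg_ne_zero]
  have hTJ := hJ.mem_iff.1 hsub (sqExp T) (mem_support_iff.2 hcoeff)
  rw [support_sqExp] at hTJ
  exact hT.prop.2 hTJ

lemma maxGraded_smul_top_ne_top (hI : GenBySqMonOfDeg K (fun _ => True) I)
    (hJ : GenBySqMonOfDeg K (fun _ => True) J) (hIJ : ¬I ≤ J) :
    maxGraded K n • (⊤ : Submodule (MvPolynomial (Fin n) K) (idealQuot I J)) ≠ ⊤ := by
  obtain ⟨T, hT⟩ := (Set.toFinite (monoPoset K I J)).exists_minimal (hI.monoPoset_nonempty hJ hIJ)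
  intro htop
  refine C_smul_sqMonClass_notMem hI hJ hT one_ne_zero ?_
  rw [htop]
  exact Submodule.mem_top

lemma koszulD_X_smul_sqMonClass {c : Finset (Fin n) → K} (hc : ∀ T, c T ≠ 0 → sqMon K T ∈ I)
    (U : Finset (Fin n)) :
    koszulD (X : Fin n → MvPolynomial (Fin n) K)
      (fun T => (C (c T) : MvPolynomial (Fin n) K) • sqMonClass K I J T) U =
      (C (koszulD (1 : Fin n → K) c U) : MvPolynomial (Fin n) K) • sqMonClass K I J U := by
  rw [koszulD_apply, koszulD_apply, map_sum, sum_smul]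
  refine sum_congr rfl fun j hj => ?_
  by_cases hcj : c (U.erase j) = 0
  · simp [hcj]
  · rw [smul_comm (X j), X_smul_sqMonClass_erase hj (hc _ hcj), Pi.one_apply, one_smul, map_zsmul,
      smul_assoc]

-- The classes `c T • x^T` form a Koszul cocycle, hence a coboundary, so each of them lies in
-- `(x_1, …, x_n) • (I/J)`; but a minimal monomial of `I \ J` is a minimal generator of `I/J`.
theorem eq_zero_of_koszulD_one_eq_zero (hI : GenBySqMonOfDeg K (fun _ => True) I)
    (hJ : GenBySqMonOfDeg K (fun _ => True) J)
    (hIJ : KoszulAcyclicBelow (X : Fin n → MvPolynomial (Fin n) K) (idealQuot I J) (d + 1))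
    {c : Finset (Fin n) → K} (hc : ∀ T, c T ≠ 0 → Minimal (· ∈ monoPoset K I J) T ∧ #T ≤ d)
    (hdc : ∀ U ∈ monoPoset K I J, koszulD (1 : Fin n → K) c U = 0) : c = 0 := by
  let f (T : Finset (Fin n)) : idealQuot I J :=
    (C (c T) : MvPolynomial (Fin n) K) • sqMonClass K I J T
  have hf : f ∈ koszulBelow (Fin n) (MvPolynomial (Fin n) K) (idealQuot I J) (d + 1) := by
    refine mem_koszulBelow.2 fun T hT => ?_
    have hcT : c T = 0 := not_imp_comm.1 (fun hcT => (hc T hcT).2) (by omega)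
    simp [f, hcT]
  have hdf : koszulD (X : Fin n → MvPolynomial (Fin n) K) f = 0 := by
    ext U
    rw [koszulD_X_smul_sqMonClass fun T hT => (hc T hT).1.prop.1]
    by_cases hU : U ∈ monoPoset K I J
    · rw [hdc U hU, C_0, zero_smul, Pi.zero_apply]
    · rw [sqMonClass_eq_zero hU, smul_zero, Pi.zero_apply]
  obtain ⟨g, hg⟩ := hIJ f hf hdf
  ext T
  by_contra hcT
  refine C_smul_sqMonClass_notMem hI hJ (hc T hcT).1 hcT (?_ : f T ∈ _)
  rw [← hg]
  exact koszulD_apply_mem_smul_top X g T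

end Cocycle

section Matching

open Finset

lemma exists_injective_apply_ne_zero_of_linearIndependent {ι κ R : Type*} [Ring R]
    [StrongRankCondition R] {v : ι → κ →₀ R} (hv : LinearIndependent R v) :
    ∃ φ : ι → κ, Function.Injective φ ∧ ∀ i, v i (φ i) ≠ 0 := by
  classical
  simp only [← Finsupp.mem_support_iff]
  refine (all_card_le_biUnion_card_iff_exists_injective fun i => (v i).support).1 fun s => ?_
  let w := (s.biUnion fun i => (v i).support).image fun k => Finsupp.single k (1 : R)
  have hspan : Set.range (fun i : s => v i) ≤ Submodule.span R (w : Set (κ →₀ R)) := by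
    rintro _ ⟨i, rfl⟩
    rw [coe_image, ← Finsupp.supported_eq_span_single]
    exact (Finsupp.mem_supported R _).2 <|
      coe_subset.2 (subset_biUnion_of_mem (fun i => (v i).support) i.2)
  calc #s ≤ #w := by
        simpa using linearIndependent_le_span' _ (hv.comp _ Subtype.val_injective) w hspan
    _ ≤ #(s.biUnion fun i => (v i).support) := card_image_le

variable {n d : ℕ}

lemma covBy_of_koszulD_one_ne_zero {ι R : Type*} [LinearOrder ι] [CommRing R]
    {c : Finset ι → R} {T U : Finset ι} (hc : ∀ S, c S ≠ 0 → S = T)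
    (hU : koszulD (1 : ι → R) c U ≠ 0) : T ⋖ U := by
  obtain ⟨j, hj, hne⟩ := exists_ne_zero_of_sum_ne_zero hU
  have hjT : U.erase j = T := hc _ fun h => hne (by rw [h, smul_zero, smul_zero])
  rw [← hjT]
  exact erase_covBy hj

lemma exists_intervalPartition_of_existsUnique {P B : Set (Finset (Fin n))}
    {top : Finset (Fin n) → Finset (Fin n)} (hBP : B ⊆ P) (htop : ∀ S ∈ B, top S ∈ P)
    (hle : ∀ S ∈ B, S ⊆ top S) (hB : ∀ T ∈ P, ∃! S, S ∈ B ∧ S ⊆ T ∧ T ⊆ top S) :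
    ∃ C, IntervalPartition P C ∧ ∀ p ∈ C, ∃ S ∈ B, top S = p.2 := by
  classical
  let C : Finset (Finset (Fin n) × Finset (Fin n)) :=
    ({S | S ∈ B} : Finset (Finset (Fin n))).image fun S => (S, top S)
  have hC {p} : p ∈ C ↔ ∃ S ∈ B, (S, top S) = p := by simp [C]
  refine ⟨C, ⟨fun p hp => ?_, fun T hT => ?_⟩, fun p hp => ?_⟩
  · obtain ⟨S, hS, rfl⟩ := hC.1 hp
    exact ⟨hBP hS, htop S hS, hle S hS⟩
  · obtain ⟨S, ⟨hS, hST⟩, huniq⟩ := hB T hT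
    refine ⟨(S, top S), ⟨hC.2 ⟨S, hS, rfl⟩, hST⟩, ?_⟩
    rintro _ ⟨hp, hS'T⟩
    obtain ⟨S', hS', rfl⟩ := hC.1 hp
    rw [huniq S' ⟨hS', hS'T⟩]
  · obtain ⟨S, hS, rfl⟩ := hC.1 hp
    exact ⟨S, hS, rfl⟩

lemma exists_intervalPartition_of_injective_covBy {P A : Set (Finset (Fin n))} (hAP : A ⊆ P)
    {φ : A → Finset (Fin n)} (hφ : Function.Injective φ) (hφP : ∀ T, φ T ∈ P \ A)
    (hcov : ∀ T, T.1 ⋖ φ T) : ∃ C, IntervalPartition P C ∧ ∀ p ∈ C, p.2 ∉ A := by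
  let top := Function.extend Subtype.val φ id
  have top_of_mem (T : A) : top T = φ T := Subtype.val_injective.extend_apply φ id T
  have top_of_notMem {T : Finset (Fin n)} (hT : T ∉ A) : top T = T :=
    Function.extend_apply' φ id T fun ⟨S, hS⟩ => hT (hS ▸ S.2)
  have htop {T : Finset (Fin n)} (hT : T ∈ P) : top T ∈ P \ A ∧ T ⊆ top T := by
    by_cases hTA : T ∈ A
    · exact top_of_mem ⟨T, hTA⟩ ▸ ⟨hφP _, (hcov ⟨T, hTA⟩).le⟩
    · exact (top_of_notMem hTA).symm ▸ ⟨⟨hT, hTA⟩, subset_rfl⟩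
  have hIcc {S T : Finset (Fin n)} (hST : S ⊆ T) (hTS : T ⊆ top S) :
      T = S ∨ ∃ h : S ∈ A, T = φ ⟨S, h⟩ := by
    by_cases hSA : S ∈ A
    · exact ((hcov ⟨S, hSA⟩).eq_or_eq hST (top_of_mem ⟨S, hSA⟩ ▸ hTS)).imp_right (⟨hSA, ·⟩)
    · exact .inl ((top_of_notMem hSA ▸ hTS).antisymm hST)
  obtain ⟨C, hC, hCtop⟩ := exists_intervalPartition_of_existsUnique (B := P \ Set.range φ)
    Set.sdiff_subset (fun S hS => (htop hS.1).1.1) (fun S hS => (htop hS.1).2) fun T hT => by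
      by_cases hTφ : T ∈ Set.range φ
      · obtain ⟨S, rfl⟩ := hTφ
        have hSφ : S.1 ∉ Set.range φ := fun ⟨S', hS'⟩ => (hφP S').2 (hS' ▸ S.2)
        refine ⟨S, ⟨⟨hAP S.2, hSφ⟩, (hcov S).le, (top_of_mem S).ge⟩, ?_⟩
        rintro S' ⟨hS', hS'S, hSS'⟩
        obtain h | ⟨hS'A, h⟩ := hIcc hS'S hSS'
        · exact (hS'.2 ⟨S, h⟩).elim
        · rw [hφ h]
      · refine ⟨T, ⟨⟨hT, hTφ⟩, subset_rfl, (htop hT).2⟩, ?_⟩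
        rintro S ⟨-, hST, hTS⟩
        exact (hIcc hST hTS).elim Eq.symm fun ⟨hS, h⟩ => (hTφ ⟨_, h.symm⟩).elim
  refine ⟨C, hC, fun p hp => ?_⟩
  obtain ⟨S, hS, hSp⟩ := hCtop p hp
  exact hSp ▸ (htop hS.1).1.2

variable {K : Type} [Field K] {I J : Ideal (MvPolynomial (Fin n) K)}

lemma le_sdepthQuot {k : ℕ} (hP : (monoPoset K I J).Nonempty)
    {C : Finset (Finset (Fin n) × Finset (Fin n))} (hC : IntervalPartition (monoPoset K I J) C)
    (hk : ∀ p ∈ C, k ≤ #p.2) : k ≤ sdepthQuot K I J := by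
  refine le_csSup ⟨n, ?_⟩ ⟨C, hC, hk⟩
  rintro l ⟨C', hC', hl⟩
  obtain ⟨T, hT⟩ := hP
  obtain ⟨p, ⟨hp, -⟩, -⟩ := hC'.2 T hT
  exact (hl p hp).trans (card_finset_fin_le p.2)

lemma exists_injective_covBy_of_koszulAcyclicBelow (hI : GenBySqMonOfDeg K (fun _ => True) I)
    (hJ : GenBySqMonOfDeg K (fun _ => True) J)
    (hIJ : KoszulAcyclicBelow (X : Fin n → MvPolynomial (Fin n) K) (idealQuot I J) (d + 1)) :
    ∃ φ : {T | Minimal (· ∈ monoPoset K I J) T ∧ #T ≤ d} → monoPoset K I J,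
      Function.Injective φ ∧ ∀ T, T.1 ⋖ (φ T).1 := by
  set P := monoPoset K I J
  set A := {T | Minimal (· ∈ P) T ∧ #T ≤ d}
  let extend := Function.ExtendByZero.linearMap K (Subtype.val : A → Finset (Fin n))
  have extend_coe (c : A → K) (T : A) : extend c T = c T :=
    Subtype.val_injective.extend_apply c (0 : Finset (Fin n) → K) T
  have mem_of_extend_ne_zero {c : A → K} {T : Finset (Fin n)} (hT : extend c T ≠ 0) : T ∈ A := by
    contrapose! hT
    exact Function.extend_apply' c (0 : Finset (Fin n) → K) T fun ⟨S, hS⟩ => hT (hS ▸ S.2)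
  let incidence : (A → K) →ₗ[K] (P →₀ K) :=
    (Finsupp.linearEquivFunOnFinite K K P).symm.toLinearMap ∘ₗ
      LinearMap.funLeft K K Subtype.val ∘ₗ koszulD (M := K) (1 : Fin n → K) ∘ₗ extend
  have hker : LinearMap.ker incidence = ⊥ := by
    refine LinearMap.ker_eq_bot'.2 fun c hc => ?_
    have hc0 : extend c = 0 := eq_zero_of_koszulD_one_eq_zero hI hJ hIJ
      (fun T hT => mem_of_extend_ne_zero hT) fun U hU => DFunLike.congr_fun hc ⟨U, hU⟩
    ext T
    rw [← extend_coe c T, hc0]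
    rfl
  obtain ⟨φ, hφ, hne⟩ := exists_injective_apply_ne_zero_of_linearIndependent <|
    (Pi.basisFun K A).linearIndependent.map' incidence hker
  refine ⟨φ, hφ, fun T => covBy_of_koszulD_one_ne_zero (fun S hS => ?_) (hne T)⟩
  lift S to A using mem_of_extend_ne_zero hS
  rw [extend_coe, Pi.basisFun_apply] at hS
  by_contra hST
  exact hS (Pi.single_eq_of_ne (fun h => hST (congrArg Subtype.val h)) 1)

theorem succ_le_sdepthQuot_of_koszulAcyclicBelow (hI : GenBySqMonOfDeg K (fun _ => True) I)
    (hJ : GenBySqMonOfDeg K (fun _ => True) J) (hIJ : ¬I ≤ J)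
    (hd : ∀ T ∈ monoPoset K I J, d ≤ #T)
    (h : KoszulAcyclicBelow (X : Fin n → MvPolynomial (Fin n) K) (idealQuot I J) (d + 1)) :
    d + 1 ≤ sdepthQuot K I J := by
  obtain ⟨φ, hφ, hcov⟩ := exists_injective_covBy_of_koszulAcyclicBelow hI hJ h
  obtain ⟨C, hC, hCtop⟩ := exists_intervalPartition_of_injective_covBy (fun T hT => hT.1.prop)
    (Subtype.val_injective.comp hφ)
    (fun T => ⟨(φ T).2, fun hφT => hφT.1.not_prop_of_lt (hcov T).lt T.2.1.prop⟩) hcov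
  refine le_sdepthQuot (hI.monoPoset_nonempty hJ hIJ) hC fun p hp => ?_
  by_contra! hpd
  rw [Nat.lt_succ_iff] at hpd
  refine hCtop p hp ⟨⟨(hC.1 p hp).2.1, fun T hT hTp => ?_⟩, hpd⟩
  exact (eq_of_subset_of_card_le hTp (hpd.trans (hd T hT))).ge

end Matching

theorem stmt_18_general {K : Type} [Field K] {n d : ℕ} {I J : Ideal (MvPolynomial (Fin n) K)}
    (hJI : ¬I ≤ J) (hI : GenBySqMonOfDeg K (fun _ => True) I)
    (hJ : GenBySqMonOfDeg K (fun _ => True) J) (hd : ∀ T ∈ monoPoset K I J, d ≤ T.card)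
    (hsd : sdepthQuot K I J = d) :
    moduleDepth (maxGraded K n) (idealQuot I J) = d := by
  have hdepth {k : ℕ} : k ≤ moduleDepth (maxGraded K n) (idealQuot I J) ↔
      KoszulAcyclicBelow (X : Fin n → MvPolynomial (Fin n) K) (idealQuot I J) k :=
    le_moduleDepth_iff_koszulAcyclicBelow (maxGraded_smul_top_ne_top hI hJ hJI)
  refine le_antisymm (ENat.lt_natCast_add_one_iff.1 (lt_of_not_ge fun hlt => ?_))
    (hdepth.2 (koszulAcyclicBelow_idealQuot hI hJ hd))
  have hsucc := succ_le_sdepthQuot_of_koszulAcyclicBelow hI hJ hJI hd (hdepth.1 (mod_cast hlt))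
  omega

/-- Theorem 4.3: Stanley's conjecture for modules of minimal
Stanley depth. -/
theorem stmt_18 (n : ℕ) (K : Type) [Field K] (d : ℕ) (hd : 0 < d)
    (I J : Ideal (MvPolynomial (Fin n) K)) (hJI : J < I)
    (hI : GenBySqMonOfDeg K (fun k => d ≤ k) I)
    (hJ : GenBySqMonOfDeg K (fun _ => True) J)
    (hrho : 0 < rho K d I)
    (hsd : sdepthQuot K I J = d) :
    moduleDepth (maxGraded K n) (idealQuot I J) = (d : ℕ∞) :=
  stmt_18_general hJI.not_ge (hI.mono fun _ _ => trivial) hJ (fun _ hT => hI.le_card hT.1) hsd
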